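/- Given β ∈ (0,1), there exists a constant C > 0, depending only on n and β, with the following property: if ψ : ℝⁿ → ℝ is Lipschitz on the closed ball B̄_R, h is a harmonic replacement of ψ in B_R with ∫_{B_R} ‖Dh‖² dx < ∞, then for every 0 < r ≤ R, ∫_{B_r} ‖Dψ − (Dψ)_r‖² dx ≤ C (r/R)^{n+2β} ∫_{B_R} ‖Dψ − (Dψ)_R‖² dx + C ∫_{B_R} ‖Dψ − Dh‖² dx, where (Dψ)_ρ denotes the average (1/|B_ρ|) ∫_{B_ρ} Dψ dx ∈ ℝⁿ. -/

import Mathlib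

open MeasureTheory Metric Set Filter
/-- `h` is a harmonic replacement of `ψ` in the ball `B_R(x₀)`: it is continuous on the
closed ball, `C²` on the open ball with vanishing Laplacian (the trace of the second
derivative) there, and agrees with `ψ` on the sphere. -/
def IsHarmRep (n : ℕ) (ψ h : EuclideanSpace ℝ (Fin n) → ℝ)
    (x₀ : EuclideanSpace ℝ (Fin n)) (R : ℝ) : Prop :=
  ContinuousOn h (closedBall x₀ R) ∧
  ContDiffOn ℝ 2 h (ball x₀ R) ∧
  (∀ x ∈ ball x₀ R,
    ∑ i : Fin n, fderiv ℝ (fderiv ℝ h) x (EuclideanSpace.single i 1)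
      (EuclideanSpace.single i 1) = 0) ∧
  ∀ x ∈ sphere x₀ R, h x = ψ x

/-- The average of the derivative of `ψ` over the ball `B_ρ = B_ρ(0)`. -/
noncomputable def avgDeriv (n : ℕ) (ψ : EuclideanSpace ℝ (Fin n) → ℝ) (ρ : ℝ) :
    EuclideanSpace ℝ (Fin n) →L[ℝ] ℝ :=
  (volume (ball (0 : EuclideanSpace ℝ (Fin n)) ρ)).toReal⁻¹ •
    ∫ x in ball (0 : EuclideanSpace ℝ (Fin n)) ρ, fderiv ℝ ψ x

/-!
The average of a harmonic function against the dilates of `φ(y) = (1 - ‖y‖²)₊` does not depend on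
the scale, because integrating the radial derivative by parts against `φ²` produces a Laplacian.
Hence harmonic gradients equal their `φ`-averages, and since `φ` is Lipschitz they satisfy
`‖Dh x - Dh x₀‖ ≲ (‖x - x₀‖ / R) ⨍_{B_R} ‖Dh - L‖` for every constant `L`. With `L = (Dh)_R`,
squaring and integrating over `B_r` gives the decay rate `(r / R)^(n + 2)` for the mean oscillation
of `Dh`. Averages nearly minimise the `L²` distance to constants, so the oscillations of `Dψ` and
`Dh` on a ball differ by a multiple of `∫ ‖Dψ - Dh‖²`, and the decay passes to `Dψ`.
-/

open InnerProductSpace Laplacian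
open scoped Topology

section Averages

variable {α G : Type*} [MeasurableSpace α] {μ : Measure α} [NormedAddCommGroup G]

theorem integral_norm_sub_sq_le {f g k : α → G}
    (hfg : MemLp (fun x => f x - g x) 2 μ) (hgk : MemLp (fun x => g x - k x) 2 μ) :
    ∫ x, ‖f x - k x‖ ^ 2 ∂μ ≤
      2 * ∫ x, ‖f x - g x‖ ^ 2 ∂μ + 2 * ∫ x, ‖g x - k x‖ ^ 2 ∂μ := by
  have hint₁ := hfg.norm.integrable_sq.const_mul 2
  have hint₂ := hgk.norm.integrable_sq.const_mul 2
  rw [← integral_const_mul, ← integral_const_mul, ← integral_add hint₁ hint₂]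
  refine integral_mono_of_nonneg (ae_of_all _ fun x => sq_nonneg _) (hint₁.add hint₂)
    (ae_of_all _ fun x => ?_)
  calc ‖f x - k x‖ ^ 2 ≤ (‖f x - g x‖ + ‖g x - k x‖) ^ 2 := by
        gcongr; exact norm_sub_le_norm_sub_add_norm_sub _ _ _
    _ ≤ 2 * (‖f x - g x‖ ^ 2 + ‖g x - k x‖ ^ 2) := add_sq_le
    _ = 2 * ‖f x - g x‖ ^ 2 + 2 * ‖g x - k x‖ ^ 2 := mul_add _ _ _

variable [IsFiniteMeasure μ] [NormedSpace ℝ G] [CompleteSpace G]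

theorem norm_average_sq_le {f : α → G} (hf : MemLp f 2 μ) :
    ‖⨍ x, f x ∂μ‖ ^ 2 ≤ ⨍ x, ‖f x‖ ^ 2 ∂μ := by
  rcases eq_zero_or_neZero μ with rfl | _
  · simp
  · exact ((convexOn_norm convex_univ).pow (fun _ _ => norm_nonneg _) 2).map_average_le
      (by fun_prop) isClosed_univ (by simp) (hf.integrable one_le_two) hf.norm.integrable_sq

theorem integral_norm_sub_average_sq_le {f : α → G} (hf : MemLp f 2 μ) (a : G) :
    ∫ x, ‖f x - ⨍ y, f y ∂μ‖ ^ 2 ∂μ ≤ 4 * ∫ x, ‖f x - a‖ ^ 2 ∂μ := by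
  rcases eq_zero_or_neZero μ with rfl | _
  · simp
  have hfa : MemLp (fun x => f x - a) 2 μ := hf.sub (memLp_const a)
  have average_sub : ⨍ x, (f x - a) ∂μ = (⨍ x, f x ∂μ) - a := by
    rw [average, integral_sub (hf.integrable one_le_two).to_average (integrable_const a),
      integral_const, probReal_univ, one_smul, average]
  have average_close : μ.real univ * ‖a - ⨍ x, f x ∂μ‖ ^ 2 ≤ ∫ x, ‖f x - a‖ ^ 2 ∂μ := by
    rw [norm_sub_rev, ← average_sub, ← measure_smul_average, smul_eq_mul]
    gcongr
    exact norm_average_sq_le hfa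
  have htriangle := integral_norm_sub_sq_le hfa (memLp_const (a - ⨍ y, f y ∂μ))
  rw [integral_const, smul_eq_mul] at htriangle
  linarith

theorem integral_norm_sub_average_sq_le_add {f g : α → G} (hf : MemLp f 2 μ) (hg : MemLp g 2 μ) :
    ∫ x, ‖f x - ⨍ y, f y ∂μ‖ ^ 2 ∂μ ≤
      8 * ∫ x, ‖f x - g x‖ ^ 2 ∂μ + 8 * ∫ x, ‖g x - ⨍ y, g y ∂μ‖ ^ 2 ∂μ := by
  have hbest := integral_norm_sub_average_sq_le hf (⨍ y, g y ∂μ)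
  have htriangle := integral_norm_sub_sq_le (hf.sub hg) (hg.sub (memLp_const (⨍ y, g y ∂μ)))
  linarith

end Averages

instance isFiniteMeasure_restrict_ball {X : Type*} [PseudoMetricSpace X] [ProperSpace X]
    [MeasurableSpace X] {μ : Measure X} [IsFiniteMeasureOnCompacts μ] {x : X} {r : ℝ} :
    IsFiniteMeasure (μ.restrict (ball x r)) :=
  isFiniteMeasure_restrict.2 measure_ball_lt_top.ne

theorem hasDerivAt_max_zero_sq (s : ℝ) :
    HasDerivAt (fun s : ℝ => max s 0 ^ 2) (2 * max s 0) s := by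
  refine hasDerivAt_of_hasDerivAt_of_ne' (x := 0) (g := fun t => 2 * max t 0) (fun t ht => ?_)
    (by fun_prop) (by fun_prop) s
  rcases ht.lt_or_gt with ht | ht
  · rw [max_eq_right ht.le, mul_zero]
    refine (hasDerivAt_const t (0 : ℝ)).congr_of_eventuallyEq ?_
    filter_upwards [gt_mem_nhds ht] with u hu
    simp [max_eq_right hu.le]
  · rw [max_eq_left ht.le]
    refine HasDerivAt.congr_of_eventuallyEq (by simpa using hasDerivAt_pow 2 t) ?_
    filter_upwards [lt_mem_nhds ht] with u hu
    rw [max_eq_left hu.le]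

section Bump

/-- The radial bump `y ↦ (1 - ‖y‖²)₊`, supported in the closed unit ball: the averaging kernel for
the mean value property. It is chosen instead of a smooth bump because it is Lipschitz and the
gradient of its square is `-4 * parabolicBump y • y`, which turns radial derivatives into
Laplacians. -/
noncomputable def parabolicBump {E : Type*} [NormedAddCommGroup E] (y : E) : ℝ :=
  max (1 - ‖y‖ ^ 2) 0

variable {E : Type*} [NormedAddCommGroup E]

@[fun_prop]
theorem continuous_parabolicBump : Continuous (parabolicBump : E → ℝ) := by
  unfold parabolicBump; fun_prop

theorem parabolicBump_nonneg (y : E) : 0 ≤ parabolicBump y := le_max_right _ _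

theorem parabolicBump_le_one (y : E) : parabolicBump y ≤ 1 :=
  max_le (sub_le_self _ (sq_nonneg _)) zero_le_one

theorem parabolicBump_eq_zero {y : E} (hy : 1 ≤ ‖y‖) : parabolicBump y = 0 :=
  max_eq_right (sub_nonpos.2 (one_le_pow₀ hy))

theorem lipschitzWith_parabolicBump : LipschitzWith 2 (parabolicBump : E → ℝ) := by
  have eq_one_sub (y : E) : parabolicBump y = 1 - min ‖y‖ 1 ^ 2 := by
    rcases le_total ‖y‖ 1 with hy | hy
    · rw [parabolicBump, min_eq_left hy,
        max_eq_left (sub_nonneg.2 (pow_le_one₀ (norm_nonneg y) hy))]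
    · rw [parabolicBump_eq_zero hy, min_eq_right hy]; norm_num
  refine LipschitzWith.of_dist_le_mul fun y z => ?_
  have hmin : |min ‖z‖ 1 - min ‖y‖ 1| ≤ dist y z := by
    refine (abs_min_sub_min_le_max ..).trans ?_
    rw [sub_self, abs_zero, max_eq_left (abs_nonneg _), dist_comm, dist_eq_norm]
    exact abs_norm_sub_norm_le z y
  calc dist (parabolicBump y) (parabolicBump z)
      = |min ‖z‖ 1 + min ‖y‖ 1| * |min ‖z‖ 1 - min ‖y‖ 1| := by
        rw [Real.dist_eq, eq_one_sub, eq_one_sub, ← abs_mul]; ring_nf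
    _ ≤ 2 * dist y z := by
        gcongr
        rw [abs_of_nonneg (by positivity)]
        linarith [min_le_right ‖z‖ 1, min_le_right ‖y‖ 1]

theorem hasCompactSupport_parabolicBump [ProperSpace E] :
    HasCompactSupport (parabolicBump : E → ℝ) :=
  .intro (isCompact_closedBall 0 1) fun y hy =>
    parabolicBump_eq_zero (by simpa using (not_le.1 (mt mem_closedBall_zero_iff.2 hy)).le)

theorem integrable_parabolicBump_smul [ProperSpace E] [MeasurableSpace E] [BorelSpace E]
    {μ : Measure E} [IsFiniteMeasureOnCompacts μ] {G : Type*} [NormedAddCommGroup G]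
    [NormedSpace ℝ G] {f : E → G} (hf : Continuous f) :
    Integrable (fun y => parabolicBump y • f y) μ :=
  (continuous_parabolicBump.smul hf).integrable_of_hasCompactSupport
    hasCompactSupport_parabolicBump.smul_right

theorem integral_parabolicBump_pos [ProperSpace E] [MeasurableSpace E] [BorelSpace E]
    (μ : Measure E) [IsFiniteMeasureOnCompacts μ] [μ.IsOpenPosMeasure] :
    0 < ∫ y, parabolicBump y ∂μ :=
  continuous_parabolicBump.integral_pos_of_hasCompactSupport_nonneg_nonzero
    hasCompactSupport_parabolicBump parabolicBump_nonneg (x := 0) (by simp [parabolicBump])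

theorem hasFDerivAt_parabolicBump_sq [InnerProductSpace ℝ E] (y : E) :
    HasFDerivAt (fun y : E => parabolicBump y ^ 2) ((-4 * parabolicBump y) • innerSL ℝ y) y := by
  have h := (hasDerivAt_max_zero_sq (1 - ‖y‖ ^ 2)).comp_hasFDerivAt y
    ((hasStrictFDerivAt_norm_sq y).hasFDerivAt.const_sub 1)
  refine h.congr_fderiv ?_
  rw [parabolicBump]
  module

end Bump

section MeanValue

variable {E F : Type*} [NormedAddCommGroup E] [NormedAddCommGroup F] [NormedSpace ℝ F]

theorem exists_contDiff_hasCompactSupport_eventuallyEq_nhdsSet [NormedSpace ℝ E]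
    [FiniteDimensional ℝ E] {n : ℕ} {h : E → F} {K : Set E} (hK : IsCompact K)
    (hh : ∀ x ∈ K, ContDiffAt ℝ n h x) :
    ∃ H : E → F, ContDiff ℝ n H ∧ HasCompactSupport H ∧ H =ᶠ[𝓝ˢ K] h := by
  have hopen : IsOpen {x | ContDiffAt ℝ n h x} :=
    isOpen_iff_mem_nhds.2 fun x hx => ContDiffAt.eventually hx (by simp)
  obtain ⟨L, hL, hKL, hLh⟩ := exists_compact_between hK hopen hh
  obtain ⟨χ, hχ_one, hχ_zero, -⟩ :=
    exists_contMDiffMap_one_nhds_of_subset_interior (n := n) (modelWithCornersSelf ℝ E)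
      hK.isClosed hKL
  have hχ : ContDiff ℝ n χ := χ.contMDiff.contDiff
  have hχL : tsupport χ ⊆ L :=
    closure_minimal (fun x hx => by_contra fun hxL => hx (hχ_zero x hxL)) hL.isClosed
  refine ⟨fun x => χ x • h x, contMDiff_iff_contDiff.1 (contMDiff_of_tsupport fun x hx => ?_),
    (HasCompactSupport.intro hL fun x => hχ_zero x).smul_right, ?_⟩
  · exact (hχ.contDiffAt.smul (hLh (hχL (tsupport_smul_subset_left _ _ hx)))).contMDiffAt
  · filter_upwards [hχ_one] with x hx
    rw [hx, one_smul]

theorem hasFDerivAt_integral_smul_comp_add_apply {P : Type*} [NormedAddCommGroup P]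
    [NormedSpace ℝ P] [NormedSpace ℝ E] [MeasurableSpace E] [BorelSpace E] {α : Type*}
    [TopologicalSpace α] [MeasurableSpace α] [OpensMeasurableSpace α] [SecondCountableTopology α]
    {μ : Measure α} [IsFiniteMeasureOnCompacts μ]
    {φ : α → ℝ} (hφ : Continuous φ) (hφc : HasCompactSupport φ)
    {H : E → F} (hH : ContDiff ℝ 1 H) (hHc : HasCompactSupport H) {a : α → E} (ha : Continuous a)
    {A : α → P →L[ℝ] E} (hA : Continuous A) (p : P) :
    HasFDerivAt (fun p => ∫ y, φ y • H (a y + A y p) ∂μ)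
      (∫ y, φ y • (fderiv ℝ H (a y + A y p)).comp (A y) ∂μ) p := by
  have hH' : Continuous (fderiv ℝ H) := hH.continuous_fderiv one_ne_zero
  obtain ⟨M, hM⟩ := (hHc.fderiv (𝕜 := ℝ)).exists_bound_of_continuous hH'
  have hcont : Continuous fun y => φ y • (fderiv ℝ H (a y + A y p)).comp (A y) :=
    hφ.smul ((hH'.comp (by fun_prop)).clm_comp hA)
  refine hasFDerivAt_integral_of_dominated_of_fderiv_le (s := univ) (𝕜 := ℝ)
    (F' := fun p y => φ y • (fderiv ℝ H (a y + A y p)).comp (A y))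
    (bound := fun y => ‖φ y‖ * (M * ‖A y‖)) univ_mem (.of_forall fun q => ?_) ?_ ?_ ?_ ?_ ?_
  · exact Continuous.aestronglyMeasurable (by fun_prop)
  · exact Continuous.integrable_of_hasCompactSupport (by fun_prop) hφc.smul_right
  · exact hcont.aestronglyMeasurable
  · refine ae_of_all _ fun y q _ => ?_
    rw [norm_smul]
    gcongr
    exact (ContinuousLinearMap.opNorm_comp_le _ _).trans (by gcongr; exact hM _)
  · exact Continuous.integrable_of_hasCompactSupport (by fun_prop) hφc.norm.mul_right
  · refine ae_of_all _ fun y q _ => ?_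
    have hline : HasFDerivAt (fun p => a y + A y p) (A y) q := (A y).hasFDerivAt.const_add _
    exact ((hH.differentiable one_ne_zero _).hasFDerivAt.comp q hline).const_smul (φ y)

variable [InnerProductSpace ℝ E] [FiniteDimensional ℝ E] [MeasurableSpace E] [BorelSpace E]
  {μ : Measure E} [μ.IsAddHaarMeasure]

theorem integral_parabolicBump_mul_inner_smul {f : E → F} (hf : ContDiff ℝ 1 f) (v : E) :
    ∫ y, (parabolicBump y * inner ℝ y v) • f y ∂μ =
      (1 / 4 : ℝ) • ∫ y, parabolicBump y ^ 2 • fderiv ℝ f y v ∂μ := by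
  have : Continuous (fderiv ℝ f) := hf.continuous_fderiv one_ne_zero
  have hderiv (y : E) : fderiv ℝ (fun y : E => parabolicBump y ^ 2) y v =
      -4 * (parabolicBump y * inner ℝ y v) := by
    rw [(hasFDerivAt_parabolicBump_sq y).fderiv]
    simp [mul_assoc]
  have hparts := integral_smul_fderiv_eq_neg_fderiv_smul_of_integrable (μ := μ) (v := v)
    (f := fun y : E => parabolicBump y ^ 2) (g := f) ?_ ?_ ?_
    (fun y _ => (hasFDerivAt_parabolicBump_sq y).differentiableAt)
    (fun y _ => hf.differentiable one_ne_zero y)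
  · simp only [hderiv, ← smul_smul (-4 : ℝ), integral_smul] at hparts
    rw [hparts]
    module
  · simp only [hderiv, mul_left_comm (-4 : ℝ), ← smul_smul (parabolicBump _)]
    exact integrable_parabolicBump_smul (by fun_prop)
  · simp only [sq, ← smul_smul]
    exact integrable_parabolicBump_smul (by fun_prop)
  · simp only [sq, ← smul_smul]
    exact integrable_parabolicBump_smul (by fun_prop)

theorem integral_parabolicBump_smul_fderiv_apply_self {H : E → F} (hH : ContDiff ℝ 2 H) (x : E)
    (t : ℝ) :
    ∫ y, parabolicBump y • fderiv ℝ H (x + t • y) y ∂μ =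
      (t / 4) • ∫ y, parabolicBump y ^ 2 • Δ H (x + t • y) ∂μ := by
  have hH₁ : ContDiff ℝ 1 (fderiv ℝ H) := hH.fderiv_right (by norm_num)
  have : Continuous (fderiv ℝ (fderiv ℝ H)) := hH₁.continuous_fderiv one_ne_zero
  let b := stdOrthonormalBasis ℝ E
  let f i y := fderiv ℝ H (x + t • y) (b i)
  have hf i : ContDiff ℝ 1 (f i) := (hH₁.comp (by fun_prop)).clm_apply contDiff_const
  have hf' i y : fderiv ℝ (f i) y (b i) = t • fderiv ℝ (fderiv ℝ H) (x + t • y) (b i) (b i) := by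
    have hline : HasFDerivAt (fun y => x + t • y) (t • ContinuousLinearMap.id ℝ E) y :=
      ((hasFDerivAt_id y).const_smul t).const_add x
    have hd : HasFDerivAt (f i) _ y :=
      ((hH₁.differentiable one_ne_zero _).hasFDerivAt.comp y hline).clm_apply
        (hasFDerivAt_const (b i) y)
    rw [hd.fderiv]
    simp
  have hparts i : ∫ y, (parabolicBump y * inner ℝ y (b i)) • f i y ∂μ =
      (t / 4) •
        ∫ y, parabolicBump y ^ 2 • fderiv ℝ (fderiv ℝ H) (x + t • y) (b i) (b i) ∂μ := by
    simp only [integral_parabolicBump_mul_inner_smul (hf i), hf', smul_comm _ t]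
    rw [integral_smul, smul_smul, one_div_mul_eq_div]
  calc ∫ y, parabolicBump y • fderiv ℝ H (x + t • y) y ∂μ
      = ∫ y, ∑ i, (parabolicBump y * inner ℝ y (b i)) • f i y ∂μ := by
        congr! 2 with y
        conv_lhs => rw [← b.sum_repr' y, map_sum, b.sum_repr' y]
        simp only [map_smul, Finset.smul_sum, smul_smul, real_inner_comm, f]
    _ = ∑ i, ∫ y, (parabolicBump y * inner ℝ y (b i)) • f i y ∂μ := by
        refine integral_finsetSum _ fun i _ => ?_
        simp only [← smul_smul]
        exact integrable_parabolicBump_smul (by have := (hf i).continuous; fun_prop)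
    _ = (t / 4) • ∑ i,
          ∫ y, parabolicBump y ^ 2 • fderiv ℝ (fderiv ℝ H) (x + t • y) (b i) (b i) ∂μ := by
        simp only [hparts, Finset.smul_sum]
    _ = (t / 4) • ∫ y, parabolicBump y ^ 2 • Δ H (x + t • y) ∂μ := by
        rw [← integral_finsetSum]
        · simp [laplacian_eq_iteratedFDeriv_orthonormalBasis H b, iteratedFDeriv_two_apply,
            Finset.smul_sum]
        · intro i _
          simp only [sq, ← smul_smul]
          exact integrable_parabolicBump_smul (by fun_prop)

variable [CompleteSpace F]

theorem integral_parabolicBump_smul_comp_eq {H : E → F} (hH : ContDiff ℝ 2 H)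
    (hHc : HasCompactSupport H) {x : E} {ρ : ℝ} (hρ : 0 ≤ ρ) (hΔ : ∀ z ∈ ball x ρ, Δ H z = 0) :
    ∫ y, parabolicBump y • H (x + ρ • y) ∂μ = (∫ y, parabolicBump y ∂μ) • H x := by
  let A (y : E) : ℝ →L[ℝ] E := (ContinuousLinearMap.lsmul ℝ ℝ).flip y
  have hderiv (t : ℝ) : HasDerivAt (fun t : ℝ => ∫ y, parabolicBump y • H (x + t • y) ∂μ)
      ((t / 4) • ∫ y, parabolicBump y ^ 2 • Δ H (x + t • y) ∂μ) t := by
    have h := hasFDerivAt_integral_smul_comp_add_apply (μ := μ) continuous_parabolicBump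
      hasCompactSupport_parabolicBump (hH.of_le one_le_two) hHc (continuous_const (y := x))
      (A := A) (by fun_prop) t
    refine h.hasDerivAt.congr_deriv ?_
    rw [← integral_parabolicBump_smul_fderiv_apply_self hH, ContinuousLinearMap.integral_apply]
    · simp [A]
    · have hH' : Continuous (fderiv ℝ H) := hH.continuous_fderiv two_ne_zero
      exact integrable_parabolicBump_smul ((hH'.comp (by fun_prop)).clm_comp (by fun_prop))
  have hzero (t : ℝ) (ht : t ∈ Ico 0 ρ) :
      (t / 4) • ∫ y, parabolicBump y ^ 2 • Δ H (x + t • y) ∂μ = 0 := by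
    rw [integral_eq_zero_of_ae (ae_of_all _ fun y => ?_), smul_zero]
    rcases le_total 1 ‖y‖ with hy | hy
    · simp [parabolicBump_eq_zero hy]
    · rw [hΔ _ ?_, smul_zero, Pi.zero_apply]
      rw [mem_ball_iff_norm, add_sub_cancel_left, norm_smul, Real.norm_of_nonneg ht.1]
      exact (mul_le_of_le_one_right ht.1 hy).trans_lt ht.2
  have hconst := constant_of_has_deriv_right_zero
    (fun t _ => (hderiv t).continuousAt.continuousWithinAt)
    (fun t ht => ((hzero t ht) ▸ hderiv t).hasDerivWithinAt) ρ (right_mem_Icc.2 hρ)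
  rw [hconst, ← integral_smul_const]
  simp only [zero_smul, add_zero]

theorem integral_parabolicBump_smul_fderiv_eq {h : E → F} {x : E} {ρ : ℝ} (hρ : 0 ≤ ρ)
    (hh : HarmonicOnNhd h (closedBall x ρ)) :
    ∫ y, parabolicBump y • fderiv ℝ h (x + ρ • y) ∂μ =
      (∫ y, parabolicBump y ∂μ) • fderiv ℝ h x := by
  obtain ⟨H, hH, hHc, hHh⟩ := exists_contDiff_hasCompactSupport_eventuallyEq_nhdsSet (n := 2)
    (isCompact_closedBall x ρ) fun z hz => (hh z hz).1
  have hHh_nhds (z : E) (hz : z ∈ closedBall x ρ) : H =ᶠ[𝓝 z] h :=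
    hHh.filter_mono (nhds_le_nhdsSet hz)
  obtain ⟨ε, hε, hball⟩ := (isCompact_closedBall x ρ).exists_thickening_subset_open
    (isOpen_setOfPred_harmonicAt (f := H))
    fun z hz => (harmonicAt_congr_nhds (hHh_nhds z hz)).2 (hh z hz)
  rw [thickening_closedBall hε hρ] at hball
  have hmean : (fun x' => ∫ y, parabolicBump y • H (ρ • y + x') ∂μ) =ᶠ[𝓝 x]
      fun x' => (∫ y, parabolicBump y ∂μ) • H x' := by
    filter_upwards [ball_mem_nhds x hε] with x' hx'
    simp only [add_comm _ x']
    refine integral_parabolicBump_smul_comp_eq hH hHc hρ fun z hz => ?_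
    exact (hball (ball_subset_ball' (by linarith [mem_ball.1 hx']) hz)).2.self_of_nhds
  have hlhs := hasFDerivAt_integral_smul_comp_add_apply (μ := μ) continuous_parabolicBump
    hasCompactSupport_parabolicBump (hH.of_le one_le_two) hHc (a := fun y => ρ • y) (by fun_prop)
    (A := fun _ => ContinuousLinearMap.id ℝ E) (by fun_prop) x
  have hrhs := ((hH.differentiable two_ne_zero x).hasFDerivAt.const_smul
    (∫ y, parabolicBump y ∂μ)).congr_of_eventuallyEq hmean
  rw [← (hHh_nhds x (mem_closedBall_self hρ)).fderiv_eq, ← hlhs.unique hrhs]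
  congr! 2 with y
  rcases le_total 1 ‖y‖ with hy | hy
  · simp only [parabolicBump_eq_zero hy, zero_smul]
  · have hmem : x + ρ • y ∈ closedBall x ρ := by
      rw [mem_closedBall_iff_norm, add_sub_cancel_left, norm_smul, Real.norm_of_nonneg hρ]
      exact mul_le_of_le_one_right hρ hy
    simp only [ContinuousLinearMap.comp_id, ContinuousLinearMap.id_apply, add_comm _ x,
      (hHh_nhds _ hmem).fderiv_eq]

end MeanValue

open Module (finrank)

section Decay

variable {E F : Type*} [NormedAddCommGroup E] [InnerProductSpace ℝ E] [FiniteDimensional ℝ E]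
  [NormedAddCommGroup F] [NormedSpace ℝ F]

theorem harmonicAt_continuousLinearMap (L : E →L[ℝ] F) (x : E) : HarmonicAt L x := by
  refine ⟨L.contDiff.contDiffAt, .of_forall fun y => ?_⟩
  have hfderiv : fderiv ℝ L = fun _ => L := funext fun _ => L.fderiv
  simp [laplacian_eq_iteratedFDeriv_stdOrthonormalBasis, iteratedFDeriv_two_apply, hfderiv]

variable [MeasurableSpace E] [BorelSpace E] {μ : Measure E} [μ.IsAddHaarMeasure]

theorem integral_parabolicBump_smul_comp_add_smul (g : E → F) (x : E) {ρ : ℝ} (hρ : 0 < ρ) :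
    ∫ y, parabolicBump y • g (x + ρ • y) ∂μ =
      (ρ ^ finrank ℝ E)⁻¹ • ∫ z, parabolicBump (ρ⁻¹ • (z - x)) • g z ∂μ := by
  rw [← integral_add_left_eq_self (fun z => parabolicBump (ρ⁻¹ • (z - x)) • g z) x,
    ← Measure.integral_comp_smul_of_nonneg μ _ ρ (hR := hρ.le)]
  simp only [add_sub_cancel_left, inv_smul_smul₀ hρ.ne']

theorem norm_integral_parabolicBump_smul_sub_le {g : E → F} {x x' : E} {ρ : ℝ} (hρ : 0 < ρ)
    {s : Set E} (hx : ball x ρ ⊆ s) (hx' : ball x' ρ ⊆ s) (hg : IntegrableOn g s μ) :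
    ‖∫ y, parabolicBump y • g (x + ρ • y) ∂μ - ∫ y, parabolicBump y • g (x' + ρ • y) ∂μ‖ ≤
      2 / ρ ^ (finrank ℝ E + 1) * ‖x - x'‖ * ∫ z in s, ‖g z‖ ∂μ := by
  have integral_eq_setIntegral {w : E} (hw : ball w ρ ⊆ s) :
      ∫ z, parabolicBump (ρ⁻¹ • (z - w)) • g z ∂μ =
        ∫ z in s, parabolicBump (ρ⁻¹ • (z - w)) • g z ∂μ := by
    refine (setIntegral_eq_integral_of_forall_compl_eq_zero fun z hz => ?_).symm
    have hz : ρ ≤ ‖z - w‖ := by simpa [dist_eq_norm] using mt (@hw z) hz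
    rw [parabolicBump_eq_zero, zero_smul]
    rwa [norm_smul, Real.norm_of_nonneg (inv_pos.2 hρ).le, ← div_eq_inv_mul, one_le_div hρ]
  have integrable (w : E) :
      IntegrableOn (fun z => parabolicBump (ρ⁻¹ • (z - w)) • g z) s μ :=
    hg.bdd_smul 1 (Continuous.aestronglyMeasurable (by fun_prop)) (ae_of_all _ fun z =>
      (Real.norm_of_nonneg (parabolicBump_nonneg _)).trans_le (parabolicBump_le_one _))
  have pointwise (z : E) :
      ‖parabolicBump (ρ⁻¹ • (z - x)) • g z - parabolicBump (ρ⁻¹ • (z - x')) • g z‖ ≤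
        2 * (ρ⁻¹ * ‖x - x'‖) * ‖g z‖ := by
    rw [← sub_smul, norm_smul]
    gcongr
    refine (lipschitzWith_parabolicBump.norm_sub_le _ _).trans_eq ?_
    rw [← smul_sub, sub_sub_sub_cancel_left, norm_smul, Real.norm_of_nonneg (inv_pos.2 hρ).le,
      norm_sub_rev, NNReal.coe_ofNat]
  rw [integral_parabolicBump_smul_comp_add_smul _ _ hρ,
    integral_parabolicBump_smul_comp_add_smul _ _ hρ, ← smul_sub, integral_eq_setIntegral hx,
    integral_eq_setIntegral hx', ← integral_sub (integrable x) (integrable x'), norm_smul,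
    Real.norm_of_nonneg (by positivity)]
  calc _ ≤ (ρ ^ finrank ℝ E)⁻¹ * ∫ z in s, 2 * (ρ⁻¹ * ‖x - x'‖) * ‖g z‖ ∂μ := by
        gcongr
        exact norm_integral_le_of_norm_le (hg.norm.const_mul _) (ae_of_all _ pointwise)
    _ = 2 / ρ ^ (finrank ℝ E + 1) * ‖x - x'‖ * ∫ z in s, ‖g z‖ ∂μ := by
        rw [integral_const_mul, pow_succ]; field_simp

theorem addHaar_real_ball_of_pos (x : E) {r : ℝ} (hr : 0 < r) :
    μ.real (ball x r) = r ^ finrank ℝ E * μ.real (ball 0 1) := by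
  rw [measureReal_def, Measure.addHaar_ball_of_pos μ x hr, ENNReal.toReal_mul,
    ENNReal.toReal_ofReal (by positivity), measureReal_def]

variable [CompleteSpace F]

theorem norm_fderiv_sub_fderiv_le {h : E → F} {x₀ : E} {R : ℝ}
    (hh : HarmonicOnNhd h (ball x₀ R)) (hint : IntegrableOn (fderiv ℝ h) (ball x₀ R) μ)
    (L : E →L[ℝ] F) {x : E} (hx : x ∈ ball x₀ (R / 2)) :
    ‖fderiv ℝ h x - fderiv ℝ h x₀‖ ≤
      2 ^ (finrank ℝ E + 2) * (μ.real (ball 0 1) / ∫ y, parabolicBump y ∂μ) *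
        (‖x - x₀‖ / R) * ⨍ z in ball x₀ R, ‖fderiv ℝ h z - L‖ ∂μ := by
  have hR : 0 < R := by linarith [dist_nonneg.trans_lt (mem_ball.1 hx)]
  have hx₀ : x₀ ∈ ball x₀ (R / 2) := mem_ball_self (by positivity)
  have hball {w : E} (hw : w ∈ ball x₀ (R / 2)) : closedBall w (R / 2) ⊆ ball x₀ R :=
    closedBall_subset_ball' (by linarith [mem_ball.1 hw])
  have hmem {w : E} (hw : w ∈ ball x₀ (R / 2)) : w ∈ ball x₀ R :=
    ball_subset_ball (half_le_self hR.le) hw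
  have hhL : HarmonicOnNhd (h - ⇑L) (ball x₀ R) :=
    hh.sub fun z _ => harmonicAt_continuousLinearMap L z
  have hfderiv {z : E} (hz : z ∈ ball x₀ R) : fderiv ℝ (h - ⇑L) z = fderiv ℝ h z - L := by
    rw [fderiv_sub ((hh z hz).1.differentiableAt two_ne_zero) L.differentiableAt, L.fderiv]
  have hintL : IntegrableOn (fderiv ℝ (h - ⇑L)) (ball x₀ R) μ :=
    (hint.sub (integrableOn_const measure_ball_lt_top.ne)).congr_fun (fun z hz => (hfderiv hz).symm)
      measurableSet_ball
  have hmean {w : E} (hw : w ∈ ball x₀ (R / 2)) :=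
    integral_parabolicBump_smul_fderiv_eq (μ := μ) (by positivity) (hhL.mono (hball hw))
  have hker := norm_integral_parabolicBump_smul_sub_le (by positivity)
    (ball_subset_closedBall.trans (hball hx)) (ball_subset_closedBall.trans (hball hx₀)) hintL
  have hc := integral_parabolicBump_pos μ
  rw [hmean hx, hmean hx₀, ← smul_sub, norm_smul, Real.norm_of_nonneg hc.le,
    hfderiv (hmem hx), hfderiv (hmem hx₀), sub_sub_sub_cancel_right,
    setIntegral_congr_fun measurableSet_ball fun z hz => congrArg norm (hfderiv hz),
    ← measure_smul_setAverage _ measure_ball_lt_top.ne, addHaar_real_ball_of_pos _ hR,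
    ← le_div_iff₀' hc] at hker
  refine hker.trans_eq ?_
  rw [smul_eq_mul, div_pow, pow_succ R, pow_succ 2 (finrank ℝ E + 1)]
  field_simp

theorem integral_fderiv_sub_average_sq_le_of_le_half {h : E → F} {x₀ : E} {r R : ℝ}
    (hh : HarmonicOnNhd h (ball x₀ R)) (hL2 : MemLp (fderiv ℝ h) 2 (μ.restrict (ball x₀ R)))
    (hr : 0 < r) (hrR : r ≤ R / 2) (L : E →L[ℝ] F) :
    ∫ x in ball x₀ r, ‖fderiv ℝ h x - ⨍ y in ball x₀ r, fderiv ℝ h y ∂μ‖ ^ 2 ∂μ ≤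
      4 * (2 ^ (finrank ℝ E + 2) * (μ.real (ball 0 1) / ∫ y, parabolicBump y ∂μ)) ^ 2 *
        (r / R) ^ (finrank ℝ E + 2) * ∫ x in ball x₀ R, ‖fderiv ℝ h x - L‖ ^ 2 ∂μ := by
  have hR : 0 < R := by linarith
  set K := 2 ^ (finrank ℝ E + 2) * (μ.real (ball 0 1) / ∫ y, parabolicBump y ∂μ)
  have : 0 ≤ K := by have := integral_parabolicBump_pos μ; positivity
  have hL2r := hL2.mono_measure
    (Measure.restrict_mono (ball_subset_ball (by linarith : r ≤ R)) le_rfl)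
  have jensen : (⨍ z in ball x₀ R, ‖fderiv ℝ h z - L‖ ∂μ) ^ 2 ≤
      ⨍ z in ball x₀ R, ‖fderiv ℝ h z - L‖ ^ 2 ∂μ := by
    simpa using norm_average_sq_le (hL2.sub (memLp_const L)).norm
  have pointwise (x : E) (hx : x ∈ ball x₀ r) : ‖fderiv ℝ h x - fderiv ℝ h x₀‖ ^ 2 ≤
      K ^ 2 * (r / R) ^ 2 * ⨍ z in ball x₀ R, ‖fderiv ℝ h z - L‖ ^ 2 ∂μ := by
    grw [norm_fderiv_sub_fderiv_le hh (hL2.integrable one_le_two) L (ball_subset_ball hrR hx),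
      mul_pow, mul_pow, jensen, (mem_ball_iff_norm.1 hx).le]
    exact (sq_nonneg _).trans jensen
  calc _ ≤ 4 * ∫ x in ball x₀ r, ‖fderiv ℝ h x - fderiv ℝ h x₀‖ ^ 2 ∂μ :=
        integral_norm_sub_average_sq_le hL2r _
    _ ≤ 4 * (μ.real (ball x₀ r) *
          (K ^ 2 * (r / R) ^ 2 * ⨍ z in ball x₀ R, ‖fderiv ℝ h z - L‖ ^ 2 ∂μ)) := by
        rw [← smul_eq_mul (μ.real _), ← setIntegral_const]
        gcongr 4 * ?_
        exact setIntegral_mono_on (hL2r.sub (memLp_const _)).norm.integrable_sq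
          (integrableOn_const measure_ball_lt_top.ne) measurableSet_ball pointwise
    _ = _ := by
        rw [← measure_smul_setAverage (s := ball x₀ R) _ measure_ball_lt_top.ne,
          addHaar_real_ball_of_pos _ hr, addHaar_real_ball_of_pos _ hR, smul_eq_mul, div_pow,
          div_pow]
        field_simp
        ring

theorem exists_integral_fderiv_sub_average_sq_le (μ : Measure E) [μ.IsAddHaarMeasure]
    (F : Type*) [NormedAddCommGroup F] [NormedSpace ℝ F] [CompleteSpace F] :
    ∃ C > 0, ∀ (x₀ : E) (R : ℝ) (h : E → F), HarmonicOnNhd h (ball x₀ R) →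
      MemLp (fderiv ℝ h) 2 (μ.restrict (ball x₀ R)) → ∀ r, 0 < r → r ≤ R →
        ∫ x in ball x₀ r, ‖fderiv ℝ h x - ⨍ y in ball x₀ r, fderiv ℝ h y ∂μ‖ ^ 2 ∂μ ≤
          C * (r / R) ^ (finrank ℝ E + 2) *
            ∫ x in ball x₀ R, ‖fderiv ℝ h x - ⨍ y in ball x₀ R, fderiv ℝ h y ∂μ‖ ^ 2 ∂μ := by
  set K := 4 * (2 ^ (finrank ℝ E + 2) * (μ.real (ball 0 1) / ∫ y, parabolicBump y ∂μ)) ^ 2 with hK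
  refine ⟨K + 4 * 2 ^ (finrank ℝ E + 2), by positivity, fun x₀ R h hh hL2 r hr hrR => ?_⟩
  have hR : 0 < R := hr.trans_le hrR
  set L := ⨍ y in ball x₀ R, fderiv ℝ h y ∂μ
  rcases le_or_gt r (R / 2) with hrR' | hrR'
  · refine (integral_fderiv_sub_average_sq_le_of_le_half hh hL2 hr hrR' L).trans ?_
    rw [← hK]
    gcongr
    exact le_add_of_nonneg_right (by positivity)
  · have hL2r := hL2.mono_measure (Measure.restrict_mono (ball_subset_ball hrR) le_rfl)
    have hratio : 1 ≤ 2 * (r / R) := by rw [← mul_div_assoc, one_le_div hR]; linarith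
    calc _ ≤ 4 * ∫ x in ball x₀ r, ‖fderiv ℝ h x - L‖ ^ 2 ∂μ :=
          integral_norm_sub_average_sq_le hL2r L
      _ ≤ 4 * ∫ x in ball x₀ R, ‖fderiv ℝ h x - L‖ ^ 2 ∂μ := by
          gcongr
          · exact ae_of_all _ fun x => sq_nonneg _
          · exact (hL2.sub (memLp_const L)).norm.integrable_sq
      _ ≤ 4 * (2 * (r / R)) ^ (finrank ℝ E + 2) *
            ∫ x in ball x₀ R, ‖fderiv ℝ h x - L‖ ^ 2 ∂μ := by
          gcongr
          exact le_mul_of_one_le_right (by positivity) (one_le_pow₀ hratio)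
      _ ≤ _ := by
          rw [mul_pow, ← mul_assoc]
          gcongr
          exact le_add_of_nonneg_left (by positivity)

theorem decay_in_terms_of_harmonic_replacement_general (μ : Measure E) [μ.IsAddHaarMeasure]
    (F : Type*) [NormedAddCommGroup F] [NormedSpace ℝ F] [CompleteSpace F] :
    ∃ C > 0, ∀ (x₀ : E) (R : ℝ) (f : E → E →L[ℝ] F) (h : E → F),
      MemLp f 2 (μ.restrict (ball x₀ R)) → HarmonicOnNhd h (ball x₀ R) →
      MemLp (fderiv ℝ h) 2 (μ.restrict (ball x₀ R)) → ∀ r, 0 < r → r ≤ R →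
        ∫ x in ball x₀ r, ‖f x - ⨍ y in ball x₀ r, f y ∂μ‖ ^ 2 ∂μ ≤
          C * (r / R) ^ (finrank ℝ E + 2) *
              ∫ x in ball x₀ R, ‖f x - ⨍ y in ball x₀ R, f y ∂μ‖ ^ 2 ∂μ +
            C * ∫ x in ball x₀ R, ‖f x - fderiv ℝ h x‖ ^ 2 ∂μ := by
  obtain ⟨C, hC, hdecay⟩ := exists_integral_fderiv_sub_average_sq_le μ F
  refine ⟨64 * C + 8, by positivity, fun x₀ R f h hf hh hDh r hr hrR => ?_⟩
  have hR : 0 < R := hr.trans_le hrR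
  have hrestrict : μ.restrict (ball x₀ r) ≤ μ.restrict (ball x₀ R) :=
    Measure.restrict_mono (ball_subset_ball hrR) le_rfl
  have hcompare_r := integral_norm_sub_average_sq_le_add (hf.mono_measure hrestrict)
    (hDh.mono_measure hrestrict)
  have hcompare_R := integral_norm_sub_average_sq_le_add hDh hf
  simp only [norm_sub_rev (fderiv ℝ h _) (f _)] at hcompare_R
  have hmono : ∫ x in ball x₀ r, ‖f x - fderiv ℝ h x‖ ^ 2 ∂μ ≤
      ∫ x in ball x₀ R, ‖f x - fderiv ℝ h x‖ ^ 2 ∂μ :=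
    integral_mono_measure hrestrict (ae_of_all _ fun x => sq_nonneg _)
      (hf.sub hDh).norm.integrable_sq
  set P := ∫ x in ball x₀ R, ‖f x - ⨍ y in ball x₀ R, f y ∂μ‖ ^ 2 ∂μ
  set Q := ∫ x in ball x₀ R, ‖f x - fderiv ℝ h x‖ ^ 2 ∂μ
  have : 0 ≤ P := integral_nonneg fun x => sq_nonneg _
  have : 0 ≤ Q := integral_nonneg fun x => sq_nonneg _
  set θ := (r / R) ^ (finrank ℝ E + 2)
  have : 0 ≤ θ := by positivity
  have hθ_le_one : θ ≤ 1 := pow_le_one₀ (by positivity) (div_le_one_of_le₀ hrR hR.le)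
  calc _ ≤ 8 * Q + 8 * (C * θ * (8 * Q + 8 * P)) := by
        grw [hcompare_r, hmono, hdecay x₀ R h hh hDh r hr hrR, hcompare_R]
    _ = 64 * C * θ * P + (64 * C * θ + 8) * Q := by ring
    _ ≤ (64 * C + 8) * θ * P + (64 * C * 1 + 8) * Q := by
        gcongr
        linarith
    _ = (64 * C + 8) * θ * P + (64 * C + 8) * Q := by rw [mul_one]

end Decay

theorem memLp_fderiv_of_lipschitzOnWith {E F : Type*} [NormedAddCommGroup E] [NormedSpace ℝ E]
    [FiniteDimensional ℝ E] [MeasurableSpace E] [BorelSpace E] [NormedAddCommGroup F]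
    [NormedSpace ℝ F] [CompleteSpace F] [SecondCountableTopology F] {μ : Measure E}
    [IsFiniteMeasureOnCompacts μ] {f : E → F} {K : NNReal} {x₀ : E} {R : ℝ}
    (hf : LipschitzOnWith K f (ball x₀ R)) (p : ENNReal) :
    MemLp (fderiv ℝ f) p (μ.restrict (ball x₀ R)) := by
  refine .of_bound (measurable_fderiv ℝ f).aestronglyMeasurable K ?_
  filter_upwards [ae_restrict_mem measurableSet_ball] with x hx
  exact norm_fderiv_le_of_lipschitzOn ℝ (isOpen_ball.mem_nhds hx) hf

theorem IsHarmRep.harmonicOnNhd {n : ℕ} {ψ h : EuclideanSpace ℝ (Fin n) → ℝ}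
    {x₀ : EuclideanSpace ℝ (Fin n)} {R : ℝ} (hh : IsHarmRep n ψ h x₀ R) :
    HarmonicOnNhd h (ball x₀ R) := by
  intro x hx
  refine ⟨hh.2.1.contDiffAt (isOpen_ball.mem_nhds hx), ?_⟩
  filter_upwards [isOpen_ball.mem_nhds hx] with z hz
  simpa [laplacian_eq_iteratedFDeriv_orthonormalBasis h (EuclideanSpace.basisFun (Fin n) ℝ),
    iteratedFDeriv_two_apply] using hh.2.2.1 z hz

theorem avgDeriv_eq_setAverage (n : ℕ) (ψ : EuclideanSpace ℝ (Fin n) → ℝ) (ρ : ℝ) :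
    avgDeriv n ψ ρ = ⨍ x in ball 0 ρ, fderiv ℝ ψ x := by
  rw [setAverage_eq, avgDeriv, measureReal_def]

/-- Given `β ∈ (0,1)`, there is `C > 0` depending only on `n` and `β` such
that for `ψ` Lipschitz on `B̄_R`, `h` a harmonic replacement of `ψ` in `B_R` with finite
Dirichlet energy, and `0 < r ≤ R`:
`∫_{B_r} ‖Dψ − (Dψ)_r‖² ≤ C (r/R)^{n+2β} ∫_{B_R} ‖Dψ − (Dψ)_R‖² + C ∫_{B_R} ‖Dψ − Dh‖²`. -/
theorem decay_in_terms_of_harmonic_replacement (n : ℕ) (hn : 2 ≤ n)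
    (β : ℝ) (hβ : β ∈ Set.Ioo (0:ℝ) 1) :
    ∃ C > (0:ℝ), ∀ (R : ℝ), 0 < R →
      ∀ ψ h : EuclideanSpace ℝ (Fin n) → ℝ,
        (∃ K, LipschitzOnWith K ψ (closedBall (0 : EuclideanSpace ℝ (Fin n)) R)) →
        IsHarmRep n ψ h 0 R →
        IntegrableOn (fun x => ‖fderiv ℝ h x‖^2)
          (ball (0 : EuclideanSpace ℝ (Fin n)) R) volume →
        ∀ r : ℝ, 0 < r → r ≤ R →
          (∫ x in ball (0 : EuclideanSpace ℝ (Fin n)) r,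
              ‖fderiv ℝ ψ x - avgDeriv n ψ r‖^2) ≤
            C * (r / R) ^ ((n : ℝ) + 2 * β) *
              (∫ x in ball (0 : EuclideanSpace ℝ (Fin n)) R,
                ‖fderiv ℝ ψ x - avgDeriv n ψ R‖^2) +
            C * ∫ x in ball (0 : EuclideanSpace ℝ (Fin n)) R,
                ‖fderiv ℝ ψ x - fderiv ℝ h x‖^2 := by
  obtain ⟨C, hC, hdecay⟩ := decay_in_terms_of_harmonic_replacement_general
    (volume : Measure (EuclideanSpace ℝ (Fin n))) ℝ
  refine ⟨C, hC, fun R hR ψ h ⟨K, hψ⟩ hh hDh r hr hrR => ?_⟩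
  have hDψ : MemLp (fderiv ℝ ψ) 2 (volume.restrict (ball 0 R)) :=
    memLp_fderiv_of_lipschitzOnWith (hψ.mono ball_subset_closedBall) 2
  rw [IntegrableOn, ← memLp_two_iff_integrable_sq_norm
    (measurable_fderiv ℝ h).aestronglyMeasurable] at hDh
  have hexponent : (r / R) ^ (n + 2) ≤ (r / R) ^ ((n : ℝ) + 2 * β) := by
    rw [← Real.rpow_natCast, Nat.cast_add, Nat.cast_ofNat]
    exact Real.rpow_le_rpow_of_exponent_ge (by positivity) (div_le_one_of_le₀ hrR hR.le)
      (by linarith [hβ.2])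
  simp only [avgDeriv_eq_setAverage]
  refine (hdecay 0 R (fderiv ℝ ψ) h hDψ hh.harmonicOnNhd hDh r hr hrR).trans ?_
  rw [finrank_euclideanSpace_fin]
  gcongr
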